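/- (Theorem 1, case σ = 1, ξ < 0, a₀ < 0, verification.) Let ξ < 0, α > 0, and let a be a negative solution of ä(s) = ξ/(3·a(s)^{1/3}) with a(0) = a₀ < 0, ȧ(0) = a₁, defined on a maximal interval where a < 0, with a^{1/3} the real (odd) cube root. Set f(η) = ξ·√(−η²/ξ + (α/ξ)²) (defined for all η ∈ ℝ since ξ < 0), ρ(t,x) = f(x/a(3t)^{1/3})/a(3t)^{1/3} and u(t,x) = (ȧ(3t)/a(3t))·x. Then at every point (t,x) in the domain, (ρ, u) satisfies both equations ∂ρ/∂t + u·∂ρ/∂x + ρ·∂u/∂x = 0 and ∂m/∂t + 2·(∂u/∂x)·m + u·∂m/∂x + ρ·∂ρ/∂x = 0, where m = u − α²·∂²u/∂x² = u. -/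

import Mathlib

/-! Write `c(t) = a(3t)^{1/3}`. Since `a = c³`, the chain rule gives `c' = ȧ(3t)/c²`, so
`u = (c'/c) x` and `ρ = f(x/c)/c` is the mass-conserving self-similar profile carried by the
flow of `u`; this yields the continuity equation for every differentiable `f`.

As `u` is linear in `x`, `m = u`, and the momentum equation reduces to `3 (ä/a) x + ρ ρ_x = 0`.
Here `ä = ξ/(3c)` gives `3 ä/a = ξ/c⁴`, while `f f' = (f²)'/2 = -ξ η` gives
`ρ ρ_x = -ξ x/c⁴`, and the two terms cancel. The analytic input is `hasDerivAt_cbrt` (the cube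
root is differentiable on the negative axis) and `hasDerivAt_profile`. -/

/-- The real (odd) cube root: the odd function with (cbrt x)³ = x for all real x. -/
noncomputable def cbrt (x : ℝ) : ℝ := Real.sign x * |x| ^ ((1:ℝ)/3)

theorem cbrt_of_neg {y : ℝ} (hy : y < 0) : cbrt y = -(-y) ^ ((1:ℝ)/3) := by
  simp [cbrt, Real.sign_of_neg hy, abs_of_neg hy]

theorem cbrt_neg {y : ℝ} (hy : y < 0) : cbrt y < 0 := by
  rw [cbrt_of_neg hy]
  have := Real.rpow_pos_of_pos (neg_pos.2 hy) ((1:ℝ)/3)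
  linarith

theorem cbrt_cube {y : ℝ} (hy : y < 0) : cbrt y ^ 3 = y := by
  have h : ((-y) ^ ((1:ℝ)/3)) ^ 3 = -y := by
    rw [← Real.rpow_natCast, ← Real.rpow_mul (neg_pos.2 hy).le]
    norm_num
  rw [cbrt_of_neg hy, Odd.neg_pow (by decide), h, neg_neg]

theorem hasDerivAt_cbrt {y : ℝ} (hy : y < 0) :
    HasDerivAt cbrt (1 / (3 * cbrt y ^ 2)) y := by
  have h1 : HasDerivAt (fun z : ℝ => -(-z) ^ ((1:ℝ)/3))
      (-(-1 * ((1:ℝ)/3) * (-y) ^ ((1:ℝ)/3 - 1))) y :=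
    ((hasDerivAt_neg y).rpow_const (Or.inl (neg_pos.2 hy).ne')).neg
  have h2 : cbrt =ᶠ[nhds y] fun z : ℝ => -(-z) ^ ((1:ℝ)/3) := by
    filter_upwards [Iio_mem_nhds hy] with z hz using cbrt_of_neg hz
  refine (h1.congr_of_eventuallyEq h2).congr_deriv ?_
  have hc := (cbrt_neg hy).ne
  have h3 := cbrt_cube hy
  rw [Real.rpow_sub_one (neg_pos.2 hy).ne', show (-y) ^ ((1:ℝ)/3) = -cbrt y by
    rw [cbrt_of_neg hy, neg_neg]]
  generalize cbrt y = c at *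
  subst h3
  field_simp

theorem profile_radicand_pos {ξ α : ℝ} (hξ : ξ < 0) (hα : 0 < α) (η : ℝ) :
    0 < -η ^ 2 / ξ + (α / ξ) ^ 2 := by
  have h1 : 0 ≤ -η ^ 2 / ξ := div_nonneg_of_nonpos (by nlinarith [sq_nonneg η]) hξ.le
  have h2 : α / ξ ≠ 0 := div_ne_zero hα.ne' hξ.ne
  positivity

theorem hasDerivAt_profile {ξ α : ℝ} (hξ : ξ < 0) (hα : 0 < α) (η : ℝ) :
    HasDerivAt (fun η : ℝ => ξ * Real.sqrt (-η ^ 2 / ξ + (α / ξ) ^ 2))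
      (-η / Real.sqrt (-η ^ 2 / ξ + (α / ξ) ^ 2)) η := by
  have hp := profile_radicand_pos hξ hα η
  have h1 : HasDerivAt (fun η : ℝ => -η ^ 2 / ξ + (α / ξ) ^ 2) (-(2 * η) / ξ) η := by
    simpa using (((hasDerivAt_pow 2 η).neg).div_const ξ).add_const ((α / ξ) ^ 2)
  refine ((h1.sqrt hp.ne').const_mul ξ).congr_deriv ?_
  have hs := (Real.sqrt_pos.2 hp).ne'
  have := hξ.ne
  generalize Real.sqrt (-η ^ 2 / ξ + (α / ξ) ^ 2) = s at *
  field_simp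

/-- Theorem 1, case σ = 1, ξ < 0, a₀ < 0, verification:
with a a negative solution of ä = ξ/(3a^{1/3}) (odd cube root) on [0,S),
f(η) = ξ√(−η²/ξ+(α/ξ)²) (defined on all of ℝ since ξ < 0),
ρ(t,x) = f(x/a(3t)^{1/3})/a(3t)^{1/3}, u(t,x) = (ȧ(3t)/a(3t))x, m = u − α²u_xx,
both equations of the σ = 1 two-component Camassa–Holm system hold on the domain. -/
theorem stmt10 (ξ α a₀ a₁ S : ℝ) (hξ : ξ < 0) (hα : 0 < α) (hS : 0 < S)
    (a a' : ℝ → ℝ)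
    (h0 : a 0 = a₀) (ha₀ : a₀ < 0) (h1 : a' 0 = a₁)
    (hneg : ∀ s : ℝ, 0 ≤ s → s < S → a s < 0)
    (hda : ∀ s : ℝ, 0 ≤ s → s < S → HasDerivAt a (a' s) s)
    (hode : ∀ s : ℝ, 0 ≤ s → s < S →
      HasDerivAt a' (ξ / (3 * cbrt (a s))) s) :
    let f : ℝ → ℝ := fun η => ξ * Real.sqrt (-η ^ 2 / ξ + (α / ξ) ^ 2)
    let ρ : ℝ → ℝ → ℝ := fun t x => f (x / cbrt (a (3 * t))) / cbrt (a (3 * t))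
    let u : ℝ → ℝ → ℝ := fun t x => a' (3 * t) / a (3 * t) * x
    let m : ℝ → ℝ → ℝ := fun t x => u t x - α ^ 2 * deriv (deriv (fun y => u t y)) x
    ∀ t x : ℝ, 0 ≤ t → 3 * t < S →
      (deriv (fun τ => ρ τ x) t + u t x * deriv (fun y => ρ t y) x
          + ρ t x * deriv (fun y => u t y) x = 0) ∧
      (deriv (fun τ => m τ x) t + 2 * deriv (fun y => u t y) x * m t x
          + u t x * deriv (fun y => m t y) x
          + ρ t x * deriv (fun y => ρ t y) x = 0) := by
  intro f ρ u m t x ht htS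
  have h3t : 0 ≤ 3 * t := by linarith
  have ha := hneg _ h3t htS
  have hc := (cbrt_neg ha).ne
  have hc3 := cbrt_cube ha
  have hlin : HasDerivAt (fun τ : ℝ => 3 * τ) 3 t := by
    simpa using (hasDerivAt_id t).const_mul (3:ℝ)
  have hA : HasDerivAt (fun τ => a (3 * τ)) (a' (3 * t) * 3) t :=
    (hda _ h3t htS).comp t hlin
  have hA' : HasDerivAt (fun τ => a' (3 * τ)) (ξ / (3 * cbrt (a (3 * t))) * 3) t :=
    (hode _ h3t htS).comp t hlin
  have hC : HasDerivAt (fun τ => cbrt (a (3 * τ)))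
      (1 / (3 * cbrt (a (3 * t)) ^ 2) * (a' (3 * t) * 3)) t :=
    HasDerivAt.comp (h₂ := cbrt) (h := fun τ => a (3 * τ)) t (hasDerivAt_cbrt ha) hA
  have hf : ∀ η, HasDerivAt f (-η / Real.sqrt (-η ^ 2 / ξ + (α / ξ) ^ 2)) η :=
    hasDerivAt_profile hξ hα
  have hux : ∀ τ y, HasDerivAt (fun y => u τ y) (a' (3 * τ) / a (3 * τ)) y := fun τ y => by
    simpa using (hasDerivAt_id y).const_mul (a' (3 * τ) / a (3 * τ))
  -- `u` is linear in `x`, so its second derivative vanishes for every time, not only `t`.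
  have hm : m = u := by
    funext τ y
    have h : deriv (fun y => u τ y) = fun _ => a' (3 * τ) / a (3 * τ) :=
      funext fun y => (hux τ y).deriv
    simp [m, h]
  -- `deriv` is computed from genuine derivatives, so no junk values enter.
  have hut := ((hA'.div hA ha.ne).mul_const x).deriv
  have hρx := (((hf (x / cbrt (a (3 * t)))).comp x
    ((hasDerivAt_id x).div_const (cbrt (a (3 * t))))).div_const (cbrt (a (3 * t)))).deriv
  have hρt := (((hf (x / cbrt (a (3 * t)))).comp t
    ((hasDerivAt_const t x).div hC hc)).div hC hc).deriv
  change deriv (fun τ => u τ x) t = _ at hut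
  change deriv (fun y => ρ t y) x = _ at hρx
  change deriv (fun τ => ρ τ x) t = _ at hρt
  rw [hm, hut, hρx, hρt, (hux t x).deriv]
  have hs := (Real.sqrt_pos.2 (profile_radicand_pos hξ hα (x / cbrt (a (3 * t))))).ne'
  have hξ0 := hξ.ne
  simp only [u, ρ, f, Function.comp_apply]
  generalize Real.sqrt (-(x / cbrt (a (3 * t))) ^ 2 / ξ + (α / ξ) ^ 2) = s at *
  generalize cbrt (a (3 * t)) = c at *
  rw [← hc3]
  constructor
  · field_simp
    ring
  · field_simp
    ring
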